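/- Let α, β be real numbers with α > -1/2 and α + β − 1/2 > -3/2 (i.e. α + β > −1), let γ = −1/2, and let θ > 0. Define h(T) = ∫₀ᵀ s^{2α}(T−s)^{−1/2} (∫ₛᵀ e^{θt} t^β (t−s)^{−1/2} dt) ds for T > 0. Then lim_{T→+∞} h(T) / (T^{2α+β} e^{θT} log T) = 1/θ. -/

import Mathlib

open MeasureTheory Filter intervalIntegral

/-! After exchanging the order of integration, the inner integral over `s ∈ (0, t)` is, up to powers
of `T` and `t`, Euler's integral at `x = t / T`. When its last two exponents add up to `-1` it has a
logarithmic singularity at `x = 1`: replacing the exponent of `z` by `0` costs a bounded error, and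
so does replacing that of `1 - z`, because a Möbius involution of the unit interval exchanges the
two. All that is left is `∫₀¹ (1 - x z)⁻¹ dz = -log (1 - x) / x`. Putting `t = T (1 - v)` then turns
the iterated integral into `T ^ (a + β) e^{θT} T L(θT)`, where `L` is the Laplace transform of a
function of `v` equivalent to `-log v` at `0`, so that `L(l)` is equivalent to `log l / l`. -/

section Laplace

open Set Real Asymptotics Topology

lemma abs_log_le_add_rpow {u : ℝ} (hu : 0 < u) : |log u| ≤ u + 2 * u ^ (-(1 / 2 : ℝ)) := by
  have hr := rpow_pos_of_pos hu (-(1 / 2))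
  refine abs_le.2 ⟨?_, ?_⟩
  · have h := log_le_rpow_div (inv_pos.2 hu).le (ε := 1 / 2) (by norm_num)
    rw [log_inv, inv_rpow hu.le, ← rpow_neg hu.le] at h
    linarith
  · linarith [log_le_self hu.le]

lemma integrableOn_exp_neg_mul_one_add_abs_log :
    IntegrableOn (fun w => exp (-w) * (1 + |log w|)) (Ioi 0) := by
  have h_one := GammaIntegral_convergent (s := 1) (by norm_num)
  have h_id := GammaIntegral_convergent (s := 2) (by norm_num)
  have h_rpow := GammaIntegral_convergent (s := 1 / 2) (by norm_num)
  refine Integrable.mono' ((h_one.add h_id).add (h_rpow.const_mul 2))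
    (Measurable.aestronglyMeasurable (by fun_prop))
    (ae_restrict_of_forall_mem measurableSet_Ioi fun w hw => ?_)
  rw [norm_of_nonneg (by positivity)]
  calc exp (-w) * (1 + |log w|)
    _ ≤ exp (-w) * (1 + (w + 2 * w ^ (-(1 / 2 : ℝ)))) := by
      gcongr
      exact abs_log_le_add_rpow hw
    _ = _ := by
      simp only [Pi.add_apply]
      norm_num
      ring

lemma isEquivalent_log_const_mul {c : ℝ} (hc : 0 < c) : (fun x => log (c * x)) ~[atTop] log := by
  refine (IsEquivalent.refl.add_isLittleO
    (isLittleO_const_log_atTop (c := log c))).congr_left ?_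
  filter_upwards [eventually_gt_atTop 0] with x hx
  rw [Pi.add_apply, log_mul hc.ne' hx.ne', add_comm]

lemma isEquivalent_comp_inv_mul_log {g : ℝ → ℝ} (hg : g ~[𝓝[>] 0] fun v => -log v) {w : ℝ}
    (hw : 0 < w) : (fun l => g (l⁻¹ * w)) ~[atTop] log := by
  have hlim : Tendsto (fun l : ℝ => l⁻¹ * w) atTop (𝓝[>] 0) := by
    refine tendsto_nhdsWithin_iff.2 ⟨by simpa using tendsto_inv_atTop_zero.mul_const w, ?_⟩
    filter_upwards [eventually_gt_atTop 0] with l hl using mul_pos (inv_pos.2 hl) hw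
  refine (hg.comp_tendsto hlim).trans
    ((isEquivalent_log_const_mul (inv_pos.2 hw)).congr_left (.of_forall fun l => ?_))
  rw [Function.comp_apply, ← log_inv, mul_inv, inv_inv, mul_comm]

lemma abs_comp_inv_mul_div_log_le {g : ℝ → ℝ} {C l w : ℝ} (hC : 0 ≤ C)
    (hbound : ∀ v, 0 < v → |g v| ≤ C * (1 + |log v|)) (hl : exp 1 ≤ l) (hw : 0 < w) :
    |g (l⁻¹ * w)| / log l ≤ 2 * C * (1 + |log w|) := by
  have hl0 : 0 < l := (exp_pos 1).trans_le hl
  have hlog : 1 ≤ log l := (le_log_iff_exp_le hl0).2 hl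
  have hscale : |log (l⁻¹ * w)| ≤ log l + |log w| := by
    rw [log_mul (inv_ne_zero hl0.ne') hw.ne', log_inv]
    exact (abs_add_le _ _).trans_eq (by rw [abs_neg, abs_of_nonneg (by linarith)])
  rw [div_le_iff₀ (by linarith)]
  calc |g (l⁻¹ * w)| ≤ C * (1 + |log (l⁻¹ * w)|) := hbound _ (by positivity)
    _ ≤ C * (1 + (log l + |log w|)) := by gcongr
    _ ≤ C * (2 * (1 + |log w|) * log l) := by
      gcongr
      nlinarith [abs_nonneg (log w)]
    _ = 2 * C * (1 + |log w|) * log l := by ring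

lemma tendsto_laplace_div_log_of_abs_le {g : ℝ → ℝ} {C : ℝ} (h_int : IntegrableOn g (Ioi 0))
    (hbound : ∀ v, 0 < v → |g v| ≤ C * (1 + |log v|)) (hg : g ~[𝓝[>] 0] fun v => -log v) :
    Tendsto (fun l => l * (∫ v in Ioi 0, exp (-(l * v)) * g v) / log l) atTop (𝓝 1) := by
  have hC : 0 ≤ C := by simpa using (abs_nonneg _).trans (hbound 1 one_pos)
  have key : Tendsto (fun l => ∫ w in Ioi 0, exp (-w) * (g (l⁻¹ * w) / log l)) atTop
      (𝓝 (∫ w in Ioi 0, exp (-w))) := by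
    refine tendsto_integral_filter_of_dominated_convergence
      (fun w => 2 * C * (exp (-w) * (1 + |log w|))) ?_ ?_
      (integrableOn_exp_neg_mul_one_add_abs_log.const_mul _) ?_
    · filter_upwards [eventually_gt_atTop 0] with l hl
      have : IntegrableOn (fun w => g (l⁻¹ * w)) (Ioi 0) :=
        (integrableOn_Ioi_comp_mul_left_iff g 0 (inv_pos.2 hl)).2 (by rwa [mul_zero])
      exact (Continuous.aestronglyMeasurable (by fun_prop)).mul
        (this.aestronglyMeasurable.mul_const _)
    · filter_upwards [eventually_ge_atTop (exp 1)] with l hl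
      have hlog : 0 ≤ log l := log_nonneg ((one_le_exp zero_le_one).trans hl)
      refine ae_restrict_of_forall_mem measurableSet_Ioi fun w hw => ?_
      rw [norm_mul, norm_div, norm_of_nonneg (exp_nonneg _), norm_of_nonneg hlog, norm_eq_abs,
        mul_left_comm]
      gcongr
      exact abs_comp_inv_mul_div_log_le hC hbound hl hw
    · refine ae_restrict_of_forall_mem measurableSet_Ioi fun w hw => ?_
      have hlog : ∀ᶠ l in atTop, log l ≠ 0 := tendsto_log_atTop.eventually_ne_atTop 0
      simpa using ((isEquivalent_iff_tendsto_one hlog).1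
        (isEquivalent_comp_inv_mul_log hg hw)).const_mul (exp (-w))
  rw [integral_exp_neg_Ioi_zero] at key
  refine key.congr' ?_
  filter_upwards [eventually_gt_atTop 0] with l hl
  have hsubst := integral_comp_mul_left_Ioi (fun v => exp (-(l * v)) * g v) 0 (inv_pos.2 hl)
  simp only [mul_zero, inv_inv, mul_inv_cancel_left₀ hl.ne', smul_eq_mul] at hsubst
  rw [← hsubst, ← MeasureTheory.integral_div]
  simp only [mul_div_assoc]

lemma tendsto_laplace_tail_div_log {g : ℝ → ℝ} {δ : ℝ} (hδ : 0 < δ)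
    (h_int : IntegrableOn g (Ioi δ)) :
    Tendsto (fun l => l * (∫ v in Ioi δ, exp (-(l * v)) * g v) / log l) atTop (𝓝 0) := by
  have hlim := (tendsto_rpow_mul_exp_neg_mul_atTop_nhds_zero 1 δ hδ).mul_const
    (∫ v in Ioi δ, |g v|)
  rw [zero_mul] at hlim
  refine squeeze_zero_norm' ?_ hlim
  filter_upwards [eventually_ge_atTop (exp 1)] with l hl
  have hl0 : 0 < l := (exp_pos 1).trans_le hl
  have hlog : 1 ≤ log l := (le_log_iff_exp_le hl0).2 hl
  have hI : |∫ v in Ioi δ, exp (-(l * v)) * g v| ≤ exp (-δ * l) * ∫ v in Ioi δ, |g v| := by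
    rw [← MeasureTheory.integral_const_mul, ← norm_eq_abs]
    refine norm_integral_le_of_norm_le (h_int.abs.const_mul _)
      (ae_restrict_of_forall_mem measurableSet_Ioi fun v (hv : δ < v) => ?_)
    rw [norm_mul, norm_of_nonneg (exp_nonneg _), norm_eq_abs]
    gcongr
    nlinarith
  rw [norm_eq_abs, abs_div, abs_mul, abs_of_pos hl0, abs_of_pos (zero_lt_one.trans_le hlog),
    rpow_one, mul_assoc]
  exact (div_le_self (by positivity) hlog).trans (by gcongr)

lemma tendsto_laplace_div_log {g : ℝ → ℝ} (h_int : IntegrableOn g (Ioi 0))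
    (hg : g ~[𝓝[>] 0] fun v => -log v) :
    Tendsto (fun l => l * (∫ v in Ioi 0, exp (-(l * v)) * g v) / log l) atTop (𝓝 1) := by
  obtain ⟨C, hC0, hC⟩ := hg.isBigO.exists_nonneg
  obtain ⟨δ, hδ : 0 < δ, hbound⟩ := mem_nhdsGT_iff_exists_Ioc_subset.1 hC.bound
  have hhead : Tendsto (fun l => l * (∫ v in Ioi 0, exp (-(l * v)) * (Iic δ).indicator g v) /
      log l) atTop (𝓝 1) := by
    refine tendsto_laplace_div_log_of_abs_le (C := C) (h_int.indicator measurableSet_Iic)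
      (fun v hv => ?_) (hg.congr_left ?_)
    · by_cases hvδ : v ≤ δ
      · have : |g v| ≤ C * |log v| := by simpa using hbound ⟨hv, hvδ⟩
        rw [indicator_of_mem (mem_Iic.2 hvδ)]
        linarith
      · rw [indicator_of_notMem (notMem_Iic.2 (not_le.1 hvδ)), abs_zero]
        positivity
    · filter_upwards [Ioc_mem_nhdsGT hδ] with v hv using
        (indicator_of_mem (mem_Iic.2 hv.2) g).symm
  have htail := tendsto_laplace_tail_div_log hδ (h_int.mono_set (Ioi_subset_Ioi hδ.le))
  rw [← add_zero (1 : ℝ)]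
  refine (hhead.add htail).congr' ?_
  filter_upwards [eventually_ge_atTop 0] with l hl
  have hprod : IntegrableOn (fun v => exp (-(l * v)) * g v) (Ioi 0) := by
    refine Integrable.bdd_mul (c := 1) h_int (Continuous.aestronglyMeasurable (by fun_prop))
      (ae_restrict_of_forall_mem measurableSet_Ioi fun v (hv : 0 < v) => ?_)
    rw [norm_of_nonneg (exp_nonneg _), exp_le_one_iff, neg_nonpos]
    positivity
  have hsplit : ∫ v in Ioi 0, exp (-(l * v)) * (Iic δ).indicator g v =
      ∫ v in Ioc 0 δ, exp (-(l * v)) * g v := by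
    simp_rw [← indicator_mul_right (Iic δ) (fun v => exp (-(l * v)))]
    rw [setIntegral_indicator measurableSet_Iic, Ioi_inter_Iic]
  rw [hsplit, ← add_div, ← mul_add, ← setIntegral_union Ioc_disjoint_Ioi_same measurableSet_Ioi
    (hprod.mono_set Ioc_subset_Ioi_self) (hprod.mono_set (Ioi_subset_Ioi hδ.le)),
    Ioc_union_Ioi_eq_Ioi hδ.le]

end Laplace

section Euler

open Set Real Asymptotics Topology

/-- Euler's integral for the hypergeometric function: up to a Beta factor, `eulerIntegral a b c x`
is `₂F₁ (-c) (a + 1) (a + b + 2) x`. The exponents are kept as they stand in the integrand. -/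
noncomputable def eulerIntegral (a b c x : ℝ) : ℝ :=
  ∫ z in Ioo 0 1, z ^ a * (1 - z) ^ b * (1 - x * z) ^ c

variable {a b c x : ℝ}

lemma one_sub_le_one_sub_mul {z : ℝ} (hx : x ≤ 1) (hz : 0 ≤ z) : 1 - z ≤ 1 - x * z := by
  nlinarith

lemma one_sub_mul_pos {z : ℝ} (hx : x < 1) (hz : z ∈ Icc (0 : ℝ) 1) : 0 < 1 - x * z := by
  rcases hz.1.eq_or_lt with rfl | hz0
  · simp
  · nlinarith [hz.2]

lemma integrableOn_rpow_mul_one_sub_rpow (ha : -1 < a) (hb : -1 < b) :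
    IntegrableOn (fun z : ℝ => z ^ a * (1 - z) ^ b) (Ioo 0 1) := by
  have h := Complex.betaIntegral_convergent (u := ((a + 1 : ℝ) : ℂ)) (v := ((b + 1 : ℝ) : ℂ))
    (by rw [Complex.ofReal_re]; linarith) (by rw [Complex.ofReal_re]; linarith)
  rw [intervalIntegrable_iff_integrableOn_Ioo_of_le zero_le_one] at h
  refine IntegrableOn.congr_fun h.re (fun z hz => ?_) measurableSet_Ioo
  have ha' : ((a + 1 : ℝ) : ℂ) - 1 = (a : ℂ) := by push_cast; ring
  have hb' : ((b + 1 : ℝ) : ℂ) - 1 = (b : ℂ) := by push_cast; ring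
  simp only [ha', hb']
  rw [← Complex.ofReal_cpow hz.1.le, ← Complex.ofReal_one, ← Complex.ofReal_sub,
    ← Complex.ofReal_cpow (sub_nonneg.2 hz.2.le), ← Complex.ofReal_mul]
  exact Complex.ofReal_re _

lemma integrableOn_rpow_mul_one_sub_rpow_mul_one_sub_mul_rpow (ha : -1 < a) (hb : -1 < b)
    (hx : x < 1) :
    IntegrableOn (fun z : ℝ => z ^ a * (1 - z) ^ b * (1 - x * z) ^ c) (Ioo 0 1) := by
  rw [← integrableOn_Icc_iff_integrableOn_Ioo]
  refine IntegrableOn.mul_continuousOn ?_ (ContinuousOn.rpow_const (by fun_prop) fun z hz =>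
    Or.inl (one_sub_mul_pos hx hz).ne') isCompact_Icc
  rw [integrableOn_Icc_iff_integrableOn_Ioo]
  exact integrableOn_rpow_mul_one_sub_rpow ha hb

lemma eulerIntegral_nonneg (hx : x ≤ 1) : 0 ≤ eulerIntegral a b c x :=
  setIntegral_nonneg measurableSet_Ioo fun z hz => by
    have h1 : 0 < 1 - z := sub_pos.2 hz.2
    have h2 := h1.trans_le (one_sub_le_one_sub_mul hx hz.1.le)
    have := hz.1
    positivity

@[fun_prop]
lemma measurable_eulerIntegral : Measurable (eulerIntegral a b c) := by
  have : StronglyMeasurable fun q : ℝ × ℝ => q.2 ^ a * (1 - q.2) ^ b * (1 - q.1 * q.2) ^ c :=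
    Measurable.stronglyMeasurable (by fun_prop)
  exact this.integral_prod_right'.measurable

lemma eulerIntegral_le {e : ℝ} (ha : -1 < a) (he : 0 ≤ e) (hec : e ≤ -c) (hbce : -1 < b + c + e)
    (hx : x ∈ Ico 0 1) :
    eulerIntegral a b c x ≤ (1 - x) ^ (-e) * ∫ z in Ioo 0 1, z ^ a * (1 - z) ^ (b + c + e) := by
  rw [← MeasureTheory.integral_const_mul]
  refine setIntegral_mono_on
    (integrableOn_rpow_mul_one_sub_rpow_mul_one_sub_mul_rpow ha (by linarith) hx.2)
    ((integrableOn_rpow_mul_one_sub_rpow ha hbce).const_mul _) measurableSet_Ioo fun z hz => ?_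
  have hz0 : 0 < z := hz.1
  have hz1 : 0 < 1 - z := sub_pos.2 hz.2
  have hxz : 0 < 1 - x * z := one_sub_mul_pos hx.2 (Ioo_subset_Icc_self hz)
  have hx1 : 0 < 1 - x := sub_pos.2 hx.2
  have hle : 1 - x ≤ 1 - x * z :=
    sub_le_sub_left (mul_le_of_le_one_right hx.1 hz.2.le) 1
  calc z ^ a * (1 - z) ^ b * (1 - x * z) ^ c
    _ = z ^ a * (1 - z) ^ b * ((1 - x * z) ^ (c + e) * (1 - x * z) ^ (-e)) := by
      rw [← rpow_add hxz, add_neg_cancel_right]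
    _ ≤ z ^ a * (1 - z) ^ b * ((1 - z) ^ (c + e) * (1 - x) ^ (-e)) := by
      gcongr ?_ * (?_ * ?_)
      · exact rpow_le_rpow_of_nonpos hz1 (one_sub_le_one_sub_mul hx.2.le hz0.le) (by linarith)
      · exact rpow_le_rpow_of_nonpos hx1 hle (by linarith)
    _ = _ := by
      rw [add_assoc b, rpow_add hz1 b]
      ring

lemma integrableOn_rpow_mul_eulerIntegral {p : ℝ} (ha : -1 < a) (hb : -1 < b) (hp : -1 < p)
    (hbc : b + c = -1) :
    IntegrableOn (fun x => x ^ p * eulerIntegral a b c x) (Ioo 0 1) := by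
  obtain ⟨e, he0, heb⟩ := exists_between (lt_min one_pos (neg_lt_iff_pos_add.1 hb))
  rw [lt_min_iff] at heb
  refine Integrable.mono' ((integrableOn_rpow_mul_one_sub_rpow hp (b := -e) (by linarith)).mul_const
    (∫ z in Ioo 0 1, z ^ a * (1 - z) ^ (b + c + e)))
    (Measurable.aestronglyMeasurable (by fun_prop))
    (ae_restrict_of_forall_mem measurableSet_Ioo fun x hx => ?_)
  have hE := eulerIntegral_nonneg (a := a) (b := b) (c := c) hx.2.le
  have hx0 := hx.1
  rw [norm_of_nonneg (by positivity), mul_assoc]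
  gcongr
  exact eulerIntegral_le ha he0.le (by linarith) (by linarith) (Ioo_subset_Ico_self hx)

/-- The Möbius involution of the unit interval that exchanges its endpoints and, as a change of
variables, the first two exponents of `eulerIntegral`. -/
noncomputable def unitMoebius (x w : ℝ) : ℝ := (1 - w) / (1 - x * w)

lemma one_sub_unitMoebius {w : ℝ} (hw : 1 - x * w ≠ 0) :
    1 - unitMoebius x w = w * (1 - x) / (1 - x * w) := by
  rw [unitMoebius, one_sub_div hw]
  ring

lemma one_sub_mul_unitMoebius {w : ℝ} (hw : 1 - x * w ≠ 0) :
    1 - x * unitMoebius x w = (1 - x) / (1 - x * w) := by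
  rw [unitMoebius]
  field_simp
  ring

lemma unitMoebius_mem_Ioo {w : ℝ} (hx : x < 1) (hw : w ∈ Ioo (0 : ℝ) 1) :
    unitMoebius x w ∈ Ioo (0 : ℝ) 1 := by
  have hxw := one_sub_mul_pos hx (Ioo_subset_Icc_self hw)
  refine ⟨div_pos (sub_pos.2 hw.2) hxw, sub_pos.1 ?_⟩
  rw [one_sub_unitMoebius hxw.ne']
  exact div_pos (mul_pos hw.1 (sub_pos.2 hx)) hxw

lemma unitMoebius_unitMoebius {w : ℝ} (hx : x < 1) (hw : w ∈ Ioo (0 : ℝ) 1) :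
    unitMoebius x (unitMoebius x w) = w := by
  have hxw := (one_sub_mul_pos hx (Ioo_subset_Icc_self hw)).ne'
  have hx1 : 1 - x ≠ 0 := (sub_pos.2 hx).ne'
  rw [unitMoebius, one_sub_unitMoebius hxw, one_sub_mul_unitMoebius hxw,
    div_div_div_cancel_right₀ hxw, mul_div_cancel_right₀ _ hx1]

lemma bijOn_unitMoebius (hx : x < 1) : BijOn (unitMoebius x) (Ioo 0 1) (Ioo 0 1) :=
  have hmaps : MapsTo (unitMoebius x) (Ioo 0 1) (Ioo 0 1) := fun _ => unitMoebius_mem_Ioo hx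
  have hinv : LeftInvOn (unitMoebius x) (unitMoebius x) (Ioo 0 1) :=
    fun _ => unitMoebius_unitMoebius hx
  InvOn.bijOn ⟨hinv, hinv⟩ hmaps hmaps

lemma hasDerivAt_unitMoebius {w : ℝ} (hw : 1 - x * w ≠ 0) :
    HasDerivAt (unitMoebius x) (-((1 - x) / (1 - x * w) ^ 2)) w := by
  refine (((hasDerivAt_id w).const_sub 1).div (((hasDerivAt_id w).const_mul x).const_sub 1)
    hw).congr_deriv ?_
  simp only [id]
  field_simp
  ring

lemma eulerIntegral_symm (a b : ℝ) (hx : x < 1) :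
    eulerIntegral a b (-1 - b) x = eulerIntegral b a (-1 - a) x := by
  have hbij := bijOn_unitMoebius hx
  have hpos := fun w (hw : w ∈ Ioo (0 : ℝ) 1) => one_sub_mul_pos hx (Ioo_subset_Icc_self hw)
  rw [eulerIntegral, ← hbij.image_eq, integral_image_eq_integral_abs_deriv_smul measurableSet_Ioo
    (fun w hw => (hasDerivAt_unitMoebius (hpos w hw).ne').hasDerivWithinAt) hbij.injOn]
  refine setIntegral_congr_fun measurableSet_Ioo fun w hw => ?_
  have hw0 : 0 < w := hw.1
  have hw1 : 0 < 1 - w := sub_pos.2 hw.2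
  have hx1 : 0 < 1 - x := sub_pos.2 hx
  have hxw := hpos w hw
  simp only [smul_eq_mul]
  rw [abs_neg, abs_of_pos (by positivity), one_sub_unitMoebius hxw.ne',
    one_sub_mul_unitMoebius hxw.ne', unitMoebius, div_rpow hw1.le hxw.le,
    div_rpow (by positivity) hxw.le, div_rpow hx1.le hxw.le, mul_rpow hw0.le hx1.le,
    rpow_sub hx1, rpow_sub hxw, rpow_sub hxw, rpow_neg_one, rpow_neg_one]
  field_simp

lemma one_sub_rpow_le {z : ℝ} (ha : 0 ≤ a) (hz : z ∈ Ioo (0 : ℝ) 1) :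
    1 - z ^ a ≤ (1 + a) * (1 - z) := by
  have hbernoulli := one_add_mul_self_le_rpow_one_add (s := z - 1) (p := a + 1)
    (by linarith [hz.1]) (by linarith)
  rw [add_sub_cancel] at hbernoulli
  have hanti := rpow_le_rpow_of_exponent_ge hz.1 hz.2.le (by linarith : a ≤ a + 1)
  linarith

lemma abs_rpow_sub_one_le {z : ℝ} (a : ℝ) (hz : z ∈ Ioo (0 : ℝ) 1) :
    |z ^ a - 1| ≤ (1 + |a|) * (1 + z ^ a) * (1 - z) := by
  have hz0 := hz.1
  have hz1 : 0 < 1 - z := sub_pos.2 hz.2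
  have hza := rpow_pos_of_pos hz.1 a
  rcases le_total 0 a with ha | ha
  · rw [abs_sub_comm, abs_of_nonneg (sub_nonneg.2 (rpow_le_one hz.1.le hz.2.le ha)),
      abs_of_nonneg ha]
    refine (one_sub_rpow_le ha hz).trans ?_
    gcongr
    exact le_mul_of_one_le_right (by positivity) (by linarith)
  · have hfactor : z ^ a - 1 = z ^ a * (1 - z ^ (-a)) := by
      rw [mul_sub, ← rpow_add hz.1, add_neg_cancel, rpow_zero, mul_one]
    have hnonneg : 0 ≤ 1 - z ^ (-a) :=
      sub_nonneg.2 (rpow_le_one hz.1.le hz.2.le (neg_nonneg.2 ha))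
    rw [hfactor, abs_of_nonneg (by positivity), abs_of_nonpos ha]
    calc z ^ a * (1 - z ^ (-a)) ≤ (1 + z ^ a) * ((1 + -a) * (1 - z)) := by
          gcongr
          · linarith
          · exact one_sub_rpow_le (neg_nonneg.2 ha) hz
      _ = _ := by ring

lemma one_sub_mul_one_sub_rpow_mul_rpow_le_one {z : ℝ} (hb : -1 ≤ b) (hx : x ≤ 1)
    (hz : z ∈ Ioo (0 : ℝ) 1) : (1 - z) * ((1 - z) ^ b * (1 - x * z) ^ (-1 - b)) ≤ 1 := by
  have hz1 : 0 < 1 - z := sub_pos.2 hz.2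
  have hle := one_sub_le_one_sub_mul hx hz.1.le
  calc (1 - z) * ((1 - z) ^ b * (1 - x * z) ^ (-1 - b))
    _ ≤ (1 - z) * ((1 - z) ^ b * (1 - z) ^ (-1 - b)) := by
      gcongr _ * (_ * ?_)
      exact rpow_le_rpow_of_nonpos hz1 hle (by linarith)
    _ = 1 := by
      rw [← rpow_add hz1, add_sub_cancel, rpow_neg_one, mul_inv_cancel₀ hz1.ne']

lemma abs_eulerIntegral_sub_le (ha : -1 < a) (hb : -1 < b) (hx : x < 1) :
    |eulerIntegral a b (-1 - b) x - eulerIntegral 0 b (-1 - b) x| ≤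
      ∫ z in Ioo (0 : ℝ) 1, (1 + |a|) * (1 + z ^ a) := by
  rw [eulerIntegral, eulerIntegral, ← MeasureTheory.integral_sub
    (integrableOn_rpow_mul_one_sub_rpow_mul_one_sub_mul_rpow ha hb hx)
    (integrableOn_rpow_mul_one_sub_rpow_mul_one_sub_mul_rpow (by norm_num) hb hx),
    ← norm_eq_abs]
  have h_int : IntegrableOn (fun z : ℝ => z ^ a) (Ioo 0 1) := by
    simpa using integrableOn_rpow_mul_one_sub_rpow (b := 0) ha (by norm_num)
  refine norm_integral_le_of_norm_le (((integrable_const 1).add h_int).const_mul (1 + |a|))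
    (ae_restrict_of_forall_mem measurableSet_Ioo fun z hz => ?_)
  have hz0 := hz.1
  have hz1 : 0 < 1 - z := sub_pos.2 hz.2
  have hxz := hz1.trans_le (one_sub_le_one_sub_mul hx.le hz.1.le)
  have hK : 0 ≤ (1 - z) ^ b * (1 - x * z) ^ (-1 - b) := by positivity
  calc ‖z ^ a * (1 - z) ^ b * (1 - x * z) ^ (-1 - b) -
        z ^ (0 : ℝ) * (1 - z) ^ b * (1 - x * z) ^ (-1 - b)‖
    _ = |z ^ a - 1| * ((1 - z) ^ b * (1 - x * z) ^ (-1 - b)) := by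
      rw [rpow_zero, mul_assoc, mul_assoc, ← sub_mul, norm_mul, norm_eq_abs, norm_of_nonneg hK]
    _ ≤ (1 + |a|) * (1 + z ^ a) * (1 - z) * ((1 - z) ^ b * (1 - x * z) ^ (-1 - b)) := by
      gcongr
      exact abs_rpow_sub_one_le a hz
    _ ≤ (1 + |a|) * (1 + z ^ a) := by
      rw [mul_assoc _ (1 - z)]
      exact mul_le_of_le_one_right (by positivity)
        (one_sub_mul_one_sub_rpow_mul_rpow_le_one hb.le hx.le hz)

lemma eulerIntegral_zero_zero_neg_one (hx0 : x ≠ 0) (hx : x < 1) :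
    eulerIntegral 0 0 (-1) x = -log (1 - x) / x := by
  simp only [eulerIntegral, rpow_zero, one_mul, rpow_neg_one]
  rw [← integral_Ioc_eq_integral_Ioo, ← integral_of_le zero_le_one,
    intervalIntegral.integral_comp_sub_mul (fun y => y⁻¹) hx0, mul_one, mul_zero, sub_zero,
    integral_inv_of_pos (sub_pos.2 hx) one_pos, one_div, log_inv, smul_eq_mul, inv_mul_eq_div]

lemma isBigO_eulerIntegral_sub (ha : -1 < a) (hb : -1 < b) :
    (fun x => eulerIntegral a b (-1 - b) x - -log (1 - x) / x) =O[𝓝[<] 1] fun _ => (1 : ℝ) := by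
  refine IsBigO.of_bound ((∫ z in Ioo (0 : ℝ) 1, (1 + |a|) * (1 + z ^ a)) +
    ∫ z in Ioo (0 : ℝ) 1, (1 + |b|) * (1 + z ^ b)) ?_
  filter_upwards [Ioo_mem_nhdsLT one_pos] with x hx
  have h_left := abs_eulerIntegral_sub_le ha hb hx.2
  have h_right := abs_eulerIntegral_sub_le (b := 0) hb (by norm_num) hx.2
  rw [eulerIntegral_symm 0 b hx.2] at h_left
  rw [sub_zero] at h_left h_right
  rw [eulerIntegral_zero_zero_neg_one hx.1.ne' hx.2] at h_right
  rw [norm_one, mul_one, norm_eq_abs]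
  exact (abs_sub_le _ _ _).trans (add_le_add h_left h_right)

lemma isEquivalent_eulerIntegral (ha : -1 < a) (hb : -1 < b) (hbc : b + c = -1) :
    eulerIntegral a b c ~[𝓝[<] 1] fun x => -log (1 - x) := by
  obtain rfl : c = -1 - b := by linarith
  have hid : Tendsto (fun x : ℝ => x) (𝓝[<] 1) (𝓝 1) := tendsto_id.mono_left nhdsWithin_le_nhds
  have hlog : Tendsto (fun x : ℝ => -log (1 - x)) (𝓝[<] 1) atTop := by
    refine tendsto_neg_atBot_atTop.comp (tendsto_log_nhdsGT_zero.comp ?_)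
    refine tendsto_nhdsWithin_iff.2 ⟨by simpa using hid.const_sub 1, ?_⟩
    filter_upwards [self_mem_nhdsWithin] with x hx using sub_pos.2 (mem_Iio.1 hx)
  have hdiv : (fun x : ℝ => -log (1 - x) / x) ~[𝓝[<] 1] fun x => -log (1 - x) := by
    have := (IsEquivalent.refl (u := fun x : ℝ => -log (1 - x)) (l := 𝓝[<] 1)).div
      ((isEquivalent_const_iff_tendsto one_ne_zero).2 hid)
    simpa [Function.const_def, Pi.div_def] using this
  have hsmall : (fun x => eulerIntegral a b (-1 - b) x - -log (1 - x) / x) =o[𝓝[<] 1]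
      fun x => -log (1 - x) :=
    (isBigO_eulerIntegral_sub ha hb).trans_isLittleO
      (isLittleO_const_left.2 (Or.inr (tendsto_norm_atTop_atTop.comp hlog)))
  exact (hsmall.add_isEquivalent hdiv).congr_left (.of_forall fun x => sub_add_cancel _ _)

end Euler

section Triangle

open Set

variable {E : Type*} [NormedAddCommGroup E]

lemma setIntegral_Ioo_triangle_swap [NormedSpace ℝ E] {A B : ℝ} {f : ℝ → ℝ → E}
    (hmeas : StronglyMeasurable (Function.uncurry f))
    (hslice : ∀ t ∈ Ioo A B, IntegrableOn (fun s => f s t) (Ioo A t))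
    (hnorm : IntegrableOn (fun t => ∫ s in Ioo A t, ‖f s t‖) (Ioo A B)) :
    ∫ s in Ioo A B, ∫ t in Ioo s B, f s t = ∫ t in Ioo A B, ∫ s in Ioo A t, f s t := by
  let F : ℝ → ℝ → E := fun s t => {q : ℝ × ℝ | q.1 < q.2}.indicator (Function.uncurry f) (s, t)
  have hF_fst : ∀ t, (fun s => F s t) = (Iio t).indicator fun s => f s t := fun t => rfl
  have hF_snd : ∀ s, F s = (Ioi s).indicator (f s) := fun s => rfl
  have hfst_inter : ∀ t ∈ Ioo A B, Ioo A B ∩ Iio t = Ioo A t := fun t ht => by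
    rw [Ioo_inter_Iio, min_eq_right ht.2.le]
  have hsnd_inter : ∀ s ∈ Ioo A B, Ioo A B ∩ Ioi s = Ioo s B := fun s hs => by
    rw [Ioo_inter_Ioi, max_eq_right hs.1.le]
  have hF_meas : StronglyMeasurable (Function.uncurry F) :=
    hmeas.indicator (measurableSet_lt measurable_fst measurable_snd)
  have hF : Integrable (Function.uncurry F)
      ((volume.restrict (Ioo A B)).prod (volume.restrict (Ioo A B))) := by
    refine (integrable_prod_iff' hF_meas.aestronglyMeasurable).2
      ⟨ae_restrict_of_forall_mem measurableSet_Ioo fun t ht => ?_,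
        hnorm.congr_fun (fun t ht => ?_) measurableSet_Ioo⟩
    · simp only [Function.uncurry_apply_pair]
      rw [hF_fst, integrable_indicator_iff measurableSet_Iio, IntegrableOn,
        Measure.restrict_restrict measurableSet_Iio, inter_comm, hfst_inter t ht]
      exact hslice t ht
    · simp only [Function.uncurry_apply_pair]
      have : (fun s => ‖F s t‖) = (Iio t).indicator fun s => ‖f s t‖ := by
        ext s
        rw [← norm_indicator_eq_indicator_norm, ← hF_fst]
      rw [this, setIntegral_indicator measurableSet_Iio, hfst_inter t ht]
  calc ∫ s in Ioo A B, ∫ t in Ioo s B, f s t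
    _ = ∫ s in Ioo A B, ∫ t in Ioo A B, F s t := by
      refine setIntegral_congr_fun measurableSet_Ioo fun s hs => ?_
      simp only [hF_snd]
      rw [setIntegral_indicator measurableSet_Ioi, hsnd_inter s hs]
    _ = ∫ t in Ioo A B, ∫ s in Ioo A B, F s t := integral_integral_swap hF
    _ = ∫ t in Ioo A B, ∫ s in Ioo A t, f s t := by
      refine setIntegral_congr_fun measurableSet_Ioo fun t ht => ?_
      simp only [hF_fst]
      rw [setIntegral_indicator measurableSet_Iio, hfst_inter t ht]

lemma integrableOn_Ioo_comp_mul_left_iff {f : ℝ → E} {t : ℝ} (ht : 0 < t) :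
    IntegrableOn (fun z => f (t * z)) (Ioo 0 1) ↔ IntegrableOn f (Ioo 0 t) := by
  have h := IntervalIntegrable.comp_mul_left_iff (f := f) (a := 0) (b := t) ht.ne'
  rwa [zero_div, div_self ht.ne', intervalIntegrable_iff_integrableOn_Ioo_of_le zero_le_one,
    intervalIntegrable_iff_integrableOn_Ioo_of_le ht.le] at h

lemma setIntegral_Ioo_comp_mul_left [NormedSpace ℝ E] (f : ℝ → E) {t : ℝ} (ht : 0 < t) :
    ∫ s in Ioo 0 t, f s = t • ∫ z in Ioo 0 1, f (t * z) := by
  have h := smul_integral_comp_mul_left (a := 0) (b := 1) f t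
  rw [mul_zero, mul_one, integral_of_le zero_le_one, integral_of_le ht.le,
    integral_Ioc_eq_integral_Ioo, integral_Ioc_eq_integral_Ioo] at h
  exact h.symm

lemma integrableOn_Ioo_comp_sub_left_iff (f : ℝ → E) (t : ℝ) :
    IntegrableOn (fun z => f (t - z)) (Ioo 0 t) ↔ IntegrableOn f (Ioo 0 t) := by
  have h := (Measure.measurePreserving_sub_left volume t).integrableOn_comp_preimage (f := f)
    (s := Ioo 0 t) (MeasurableEquiv.subLeft t).measurableEmbedding
  rwa [preimage_const_sub_Ioo, sub_self, sub_zero] at h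

lemma setIntegral_Ioo_comp_sub_left [NormedSpace ℝ E] (f : ℝ → E) (t : ℝ) :
    ∫ z in Ioo 0 t, f (t - z) = ∫ z in Ioo 0 t, f z := by
  have h := (Measure.measurePreserving_sub_left volume t).setIntegral_preimage_emb
    (MeasurableEquiv.subLeft t).measurableEmbedding f (Ioo 0 t)
  rwa [preimage_const_sub_Ioo, sub_self, sub_zero] at h

end Triangle

section Volterra

open Set Real Asymptotics Topology

variable {a b c β θ t T : ℝ}

lemma rpow_mul_sub_rpow_mul_sub_rpow_comp_mul_left (ht : t ∈ Ioo 0 T) {z : ℝ}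
    (hz : z ∈ Ioo (0 : ℝ) 1) :
    (t * z) ^ a * (T - t * z) ^ b * (t - t * z) ^ c =
      T ^ b * t ^ (a + c) * (z ^ a * (1 - z) ^ c * (1 - t / T * z) ^ b) := by
  have ht0 : 0 < t := ht.1
  have hT : 0 < T := ht0.trans ht.2
  have hpos : 0 < 1 - t / T * z :=
    one_sub_mul_pos ((div_lt_one hT).2 ht.2) (Ioo_subset_Icc_self hz)
  rw [show T - t * z = T * (1 - t / T * z) by field_simp, show t - t * z = t * (1 - z) by ring,
    mul_rpow ht0.le hz.1.le, mul_rpow hT.le hpos.le, mul_rpow ht0.le (sub_nonneg.2 hz.2.le),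
    rpow_add ht0]
  ring

lemma integrableOn_rpow_mul_sub_rpow_mul_sub_rpow (ha : -1 < a) (hc : -1 < c) (ht : t ∈ Ioo 0 T) :
    IntegrableOn (fun s => s ^ a * (T - s) ^ b * (t - s) ^ c) (Ioo 0 t) := by
  rw [← integrableOn_Ioo_comp_mul_left_iff ht.1,
    integrableOn_congr_fun
      (fun z hz => rpow_mul_sub_rpow_mul_sub_rpow_comp_mul_left ht hz) measurableSet_Ioo]
  exact (integrableOn_rpow_mul_one_sub_rpow_mul_one_sub_mul_rpow ha hc
    ((div_lt_one (ht.1.trans ht.2)).2 ht.2)).const_mul _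

lemma setIntegral_rpow_mul_sub_rpow_mul_sub_rpow (ht : t ∈ Ioo 0 T) :
    ∫ s in Ioo 0 t, s ^ a * (T - s) ^ b * (t - s) ^ c =
      T ^ b * t ^ (a + c + 1) * eulerIntegral a c b (t / T) := by
  rw [setIntegral_Ioo_comp_mul_left _ ht.1, setIntegral_congr_fun measurableSet_Ioo
      fun z hz => rpow_mul_sub_rpow_mul_sub_rpow_comp_mul_left ht hz,
    MeasureTheory.integral_const_mul, ← eulerIntegral, rpow_add_one ht.1.ne', smul_eq_mul]
  ring

lemma iterated_integral_eq_setIntegral_mul_eulerIntegral {w : ℝ → ℝ} (hw : Measurable w)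
    (ha : -1 < a) (hc : -1 < c) (hT : 0 < T)
    (h_int : IntegrableOn (fun t => w t * (T ^ b * t ^ (a + c + 1) * eulerIntegral a c b (t / T)))
      (Ioo 0 T)) :
    ∫ s in (0 : ℝ)..T, s ^ a * (T - s) ^ b * (∫ t in s..T, w t * (t - s) ^ c) =
      ∫ t in Ioo 0 T, w t * (T ^ b * t ^ (a + c + 1) * eulerIntegral a c b (t / T)) := by
  let f : ℝ → ℝ → ℝ := fun s t => w t * (s ^ a * (T - s) ^ b * (t - s) ^ c)
  have hf_slice : ∀ t ∈ Ioo 0 T, ∫ s in Ioo 0 t, f s t =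
      w t * (T ^ b * t ^ (a + c + 1) * eulerIntegral a c b (t / T)) := fun t ht => by
    rw [MeasureTheory.integral_const_mul, setIntegral_rpow_mul_sub_rpow_mul_sub_rpow ht]
  have hf_norm : ∀ t ∈ Ioo 0 T, ∫ s in Ioo 0 t, ‖f s t‖ =
      ‖w t * (T ^ b * t ^ (a + c + 1) * eulerIntegral a c b (t / T))‖ := fun t ht => by
    have hpos : ∀ s ∈ Ioo 0 t, 0 ≤ s ^ a * (T - s) ^ b * (t - s) ^ c := fun s hs =>
      have hs0 := hs.1
      have hst := sub_pos.2 hs.2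
      have hsT := sub_pos.2 (hs.2.trans ht.2)
      by positivity
    simp only [f, norm_mul (w t)]
    rw [MeasureTheory.integral_const_mul, setIntegral_congr_fun measurableSet_Ioo
      fun s hs => norm_of_nonneg (hpos s hs), ← setIntegral_rpow_mul_sub_rpow_mul_sub_rpow ht,
      norm_of_nonneg (setIntegral_nonneg measurableSet_Ioo hpos)]
  calc ∫ s in (0 : ℝ)..T, s ^ a * (T - s) ^ b * (∫ t in s..T, w t * (t - s) ^ c)
    _ = ∫ s in Ioo 0 T, ∫ t in Ioo s T, f s t := by
      rw [integral_of_le hT.le, integral_Ioc_eq_integral_Ioo]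
      refine setIntegral_congr_fun measurableSet_Ioo fun s hs => ?_
      rw [integral_of_le hs.2.le, integral_Ioc_eq_integral_Ioo,
        ← MeasureTheory.integral_const_mul]
      simp only [f, mul_left_comm]
    _ = ∫ t in Ioo 0 T, ∫ s in Ioo 0 t, f s t :=
      setIntegral_Ioo_triangle_swap (Measurable.stronglyMeasurable (by fun_prop))
        (fun t ht => (integrableOn_rpow_mul_sub_rpow_mul_sub_rpow ha hc ht).const_mul _)
        (IntegrableOn.congr_fun h_int.norm (fun t ht => (hf_norm t ht).symm) measurableSet_Ioo)
    _ = _ := setIntegral_congr_fun measurableSet_Ioo hf_slice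

lemma exp_mul_rpow_mul_eulerIntegral_comp_mul_left (hbc : b + c = -1) (hT : 0 < T) {z : ℝ}
    (hz : z ∈ Ioo (0 : ℝ) 1) :
    exp (θ * (T * z)) * (T * z) ^ β *
        (T ^ b * (T * z) ^ (a + c + 1) * eulerIntegral a c b (T * z / T)) =
      T ^ (a + β) * (exp (θ * T * z) * (z ^ (a + β + c + 1) * eulerIntegral a c b z)) := by
  have hT_rpow : T ^ (a + β) = T ^ β * T ^ b * T ^ (a + c + 1) := by
    rw [← rpow_add hT, ← rpow_add hT]
    congr 1
    linarith
  have hz_rpow : z ^ (a + β + c + 1) = z ^ β * z ^ (a + c + 1) := by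
    rw [← rpow_add hz.1]
    congr 1
    ring
  rw [mul_div_cancel_left₀ z hT.ne', mul_rpow hT.le hz.1.le, mul_rpow hT.le hz.1.le, hT_rpow,
    hz_rpow, ← mul_assoc θ]
  ring

lemma iterated_integral_eq_laplace (ha : -1 < a) (hc : -1 < c) (hbc : b + c = -1)
    (hp : -2 < a + β + c) (hT : 0 < T) :
    ∫ s in (0 : ℝ)..T, s ^ a * (T - s) ^ b * (∫ t in s..T, exp (θ * t) * t ^ β * (t - s) ^ c) =
      T ^ (a + β) * exp (θ * T) * (T * ∫ v in Ioo 0 1, exp (-(θ * T * v)) *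
        ((1 - v) ^ (a + β + c + 1) * eulerIntegral a c b (1 - v))) := by
  have hunit : IntegrableOn (fun z => exp (θ * T * z) *
      (z ^ (a + β + c + 1) * eulerIntegral a c b z)) (Ioo 0 1) :=
    IntegrableOn.continuousOn_mul_of_subset (K := Icc 0 1) (by fun_prop)
      (integrableOn_rpow_mul_eulerIntegral ha hc (by linarith) (by linarith))
      isCompact_Icc measurableSet_Ioo Ioo_subset_Icc_self
  have h_int : IntegrableOn (fun t => exp (θ * t) * t ^ β *
      (T ^ b * t ^ (a + c + 1) * eulerIntegral a c b (t / T))) (Ioo 0 T) := by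
    rw [← integrableOn_Ioo_comp_mul_left_iff hT, integrableOn_congr_fun
      (fun z hz => exp_mul_rpow_mul_eulerIntegral_comp_mul_left hbc hT hz) measurableSet_Ioo]
    exact hunit.const_mul _
  rw [iterated_integral_eq_setIntegral_mul_eulerIntegral (by fun_prop) ha hc hT h_int,
    setIntegral_Ioo_comp_mul_left _ hT, setIntegral_congr_fun measurableSet_Ioo
      fun z hz => exp_mul_rpow_mul_eulerIntegral_comp_mul_left hbc hT hz,
    MeasureTheory.integral_const_mul, ← setIntegral_Ioo_comp_sub_left]
  have hexp : ∀ v, exp (θ * T * (1 - v)) = exp (θ * T) * exp (-(θ * T * v)) := fun v => by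
    rw [← exp_add]
    ring_nf
  simp only [hexp, mul_assoc (exp (θ * T))]
  rw [MeasureTheory.integral_const_mul, smul_eq_mul]
  ring

lemma isEquivalent_rpow_mul_eulerIntegral_one_sub (p : ℝ) (ha : -1 < a) (hb : -1 < b)
    (hbc : b + c = -1) :
    (fun v => (1 - v) ^ p * eulerIntegral a b c (1 - v)) ~[𝓝[>] 0] fun v => -log v := by
  have hid : Tendsto (fun v : ℝ => v) (𝓝[>] 0) (𝓝 0) := tendsto_id.mono_left nhdsWithin_le_nhds
  have hlim : Tendsto (fun v : ℝ => 1 - v) (𝓝[>] 0) (𝓝[<] 1) := by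
    refine tendsto_nhdsWithin_iff.2 ⟨by simpa using hid.const_sub 1, ?_⟩
    filter_upwards [self_mem_nhdsWithin] with v hv using sub_lt_self 1 (mem_Ioi.1 hv)
  have hpow : (fun v : ℝ => (1 - v) ^ p) ~[𝓝[>] 0] Function.const ℝ 1 := by
    rw [isEquivalent_const_iff_tendsto one_ne_zero]
    simpa using (hlim.mono_right nhdsWithin_le_nhds).rpow_const (p := p) (Or.inl one_ne_zero)
  simpa [Pi.mul_def, Function.comp_def] using
    hpow.mul ((isEquivalent_eulerIntegral ha hb hbc).comp_tendsto hlim)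

lemma tendsto_laplace_rpow_mul_eulerIntegral_one_sub {p : ℝ} (ha : -1 < a) (hb : -1 < b)
    (hbc : b + c = -1) (hp : -1 < p) :
    Tendsto (fun l => l * (∫ v in Ioo 0 1, exp (-(l * v)) *
      ((1 - v) ^ p * eulerIntegral a b c (1 - v))) / log l) atTop (𝓝 1) := by
  let g : ℝ → ℝ := (Ioo 0 1).indicator fun v => (1 - v) ^ p * eulerIntegral a b c (1 - v)
  have hg_int : IntegrableOn g (Ioi 0) :=
    (((integrableOn_Ioo_comp_sub_left_iff _ 1).2 (integrableOn_rpow_mul_eulerIntegral ha hb hp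
      hbc)).integrable_indicator measurableSet_Ioo).integrableOn
  have hg : g ~[𝓝[>] 0] fun v => -log v := by
    refine (isEquivalent_rpow_mul_eulerIntegral_one_sub p ha hb hbc).congr_left ?_
    filter_upwards [Ioo_mem_nhdsGT one_pos] with v hv
    simp only [g, indicator_of_mem hv]
  have hg_laplace : ∀ l, ∫ v in Ioi 0, exp (-(l * v)) * g v = ∫ v in Ioo 0 1,
      exp (-(l * v)) * ((1 - v) ^ p * eulerIntegral a b c (1 - v)) := fun l => by
    simp_rw [g, ← indicator_mul_right (Ioo (0 : ℝ) 1) fun v => exp (-(l * v))]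
    rw [setIntegral_indicator measurableSet_Ioo,
      inter_eq_self_of_subset_right Ioo_subset_Ioi_self]
  simpa only [hg_laplace] using tendsto_laplace_div_log hg_int hg

theorem stmt_13_general (ha : -1 < a) (hc : -1 < c) (hbc : b + c = -1) (hp : -2 < a + β + c)
    (hθ : 0 < θ) {h : ℝ → ℝ}
    (hdef : ∀ T, h T = ∫ s in (0 : ℝ)..T, s ^ a * (T - s) ^ b *
      (∫ t in s..T, exp (θ * t) * t ^ β * (t - s) ^ c)) :
    Tendsto (fun T => h T / (T ^ (a + β) * exp (θ * T) * log T)) atTop (𝓝 (1 / θ)) := by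
  have hlaplace := (tendsto_laplace_rpow_mul_eulerIntegral_one_sub (b := c) (c := b)
    (p := a + β + c + 1) ha hc (by linarith) (by linarith)).comp (tendsto_id.const_mul_atTop hθ)
  have hlog : Tendsto (fun T => log (θ * T) / log T) atTop (𝓝 1) :=
    (isEquivalent_iff_tendsto_one (tendsto_log_atTop.eventually_ne_atTop 0)).1
      (isEquivalent_log_const_mul hθ)
  have hlim := (hlaplace.mul hlog).const_mul (1 / θ)
  rw [mul_one, mul_one] at hlim
  refine hlim.congr' ?_
  filter_upwards [eventually_gt_atTop 0, (tendsto_log_atTop.comp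
    (tendsto_id.const_mul_atTop hθ)).eventually_ne_atTop 0] with T hT hlogT
  rw [hdef, iterated_integral_eq_laplace ha hc hbc hp hT]
  simp only [Function.comp_apply, id_eq] at hlogT ⊢
  field_simp

end Volterra

/-- Lemma B.2, case `γ = -1/2`. -/
theorem stmt_13 (α β θ : ℝ) (hα : -(1/2 : ℝ) < α)
    (hαβγ : -(3/2 : ℝ) < α + β - 1/2) (hθ : 0 < θ)
    (h : ℝ → ℝ)
    (hdef : ∀ T : ℝ, h T = ∫ s in (0:ℝ)..T, s ^ (2*α) * (T - s) ^ (-(1/2 : ℝ)) *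
      (∫ t in s..T, Real.exp (θ * t) * t ^ β * (t - s) ^ (-(1/2 : ℝ)))) :
    Tendsto (fun T : ℝ => h T / (T ^ (2*α+β) * Real.exp (θ * T) * Real.log T))
      atTop (nhds (1 / θ)) :=
  stmt_13_general (by linarith) (by norm_num) (by norm_num) (by linarith) hθ hdef
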